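/- For every k ∈ ℕ and every γ > 0 there exists a constant C > 0 such that for every nondegenerate triangle T ⊂ ℝ² whose inradius is at least γ·h_T, where h_T denotes the diameter of T, and for every real polynomial q in two variables of total degree at most k, C⁻¹ ‖q‖_{L²(T)} ≤ ‖ψ_T q‖_{L²(T)} + h_T ‖∇(ψ_T q)‖_{L²(T)} ≤ C ‖q‖_{L²(T)}, where ψ_T := 27 λ₀ λ₁ λ₂ is the interior bubble function of T, ∇ denotes the (Euclidean norm of the) gradient, and the L²(T)-norms are taken with respect to two-dimensional Lebesgue measure restricted to T. -/

import Mathlib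

open MeasureTheory

/-!
Fix a reference simplex. On polynomials `q` of degree at most `k` the seminorms `‖q‖`, `‖ψ q‖` and
`‖∇(ψ q)‖` live on a finite-dimensional space, and the first two are norms because `ψ` does not
vanish in the interior; so each of the three is bounded by either of the first two. An affine map
from the reference simplex onto `T` preserves polynomials, their degree bound and the bubble
function, and multiplies all `L^p` norms by the same constant. The gradient picks up the inverse of
its linear part. That inverse maps a ball of radius `γ h_T` in `T` into a translate of the reference
simplex, so its norm is at most a constant over `γ h_T`, which the weight `h_T` compensates.
-/

open Module
open scoped ENNReal NNReal

namespace BubbleEstimate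

section AffineBasis
variable {k V P W Q κ : Type*} [Ring k] [AddCommGroup V] [Module k V] [AddTorsor V P]
  [AddCommGroup W] [Module k W] [AddTorsor W Q]

theorem exists_affineEquiv_apply_eq (b : AffineBasis κ k P) (b' : AffineBasis κ k Q) :
    ∃ e : P ≃ᵃ[k] Q, ∀ i, e (b i) = b' i := by
  obtain ⟨i₀⟩ := b.nonempty
  let L : V ≃ₗ[k] W := (b.basisOf i₀).equiv (b'.basisOf i₀) (Equiv.refl _)
  have hL (i : κ) : L (b i -ᵥ b i₀) = b' i -ᵥ b' i₀ := by
    rcases eq_or_ne i i₀ with rfl | hi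
    · simp
    · simpa only [L, AffineBasis.basisOf_apply, Equiv.refl_apply] using
        (b.basisOf i₀).equiv_apply ⟨i, hi⟩ (b'.basisOf i₀) (Equiv.refl _)
  refine ⟨((AffineEquiv.vaddConst k (b i₀)).symm.trans L.toAffineEquiv).trans
    (AffineEquiv.vaddConst k (b' i₀)), fun i ↦ ?_⟩
  simp [hL]

theorem coord_eq_of_apply_eq [DecidableEq κ] (b : AffineBasis κ k P) {l : κ → P →ᵃ[k] k}
    (hl : ∀ i j, l i (b j) = if i = j then 1 else 0) : b.coord = l := by
  ext1 i
  refine AffineMap.ext_on b.tot ?_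
  rintro _ ⟨j, rfl⟩
  rw [hl, b.coord_apply]

theorem coord_affineEquiv_apply {b : AffineBasis κ k P} {b' : AffineBasis κ k Q} {e : P ≃ᵃ[k] Q}
    (he : ∀ i, e (b i) = b' i) (i : κ) (x : P) : b'.coord i (e x) = b.coord i x := by
  classical
  have h : b.coord = fun i ↦ (b'.coord i).comp e.toAffineMap :=
    coord_eq_of_apply_eq b fun i j ↦ by simp [he, b'.coord_apply]
  rw [h]
  rfl

end AffineBasis

theorem image_convexHull_range {κ E F : Type*} [AddCommGroup E] [Module ℝ E] [AddCommGroup F]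
    [Module ℝ F] {v : κ → E} {w : κ → F} {e : E →ᵃ[ℝ] F} (he : ∀ i, e (v i) = w i) :
    e '' convexHull ℝ (Set.range v) = convexHull ℝ (Set.range w) := by
  rw [e.image_convexHull, ← Set.range_comp, show e ∘ v = w from funext he]

theorem mul_norm_contLinear_le_diam {E F : Type*} [NormedAddCommGroup E] [NormedSpace ℝ E]
    [NormedAddCommGroup F] [NormedSpace ℝ F] (A : E →ᴬ[ℝ] F) {c : E} {r : ℝ} (hr : 0 ≤ r)
    {s : Set F} (hs : Bornology.IsBounded s) (hA : Set.MapsTo A (Metric.closedBall c r) s) :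
    r * ‖A.contLinear‖ ≤ Metric.diam s := by
  obtain rfl | hr := hr.eq_or_lt
  · simpa using Metric.diam_nonneg
  rw [← le_div_iff₀' hr]
  refine A.contLinear.opNorm_le_of_unit_norm (by positivity) fun v hv ↦ ?_
  rw [le_div_iff₀' hr]
  calc r * ‖A.contLinear v‖ = dist (A (r • v +ᵥ c)) (A c) := by
        rw [A.map_vadd, dist_vadd_left, map_smul, norm_smul, Real.norm_of_nonneg hr.le]
    _ ≤ Metric.diam s := Metric.dist_le_diam_of_mem hs
        (hA (by simp [hv, norm_smul, abs_of_pos hr])) (hA (Metric.mem_closedBall_self hr.le))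

section LpNorm
variable {α β F G V : Type*} [MeasurableSpace α] [MeasurableSpace β] {μ : Measure α} {p : ℝ≥0∞}
  [NormedAddCommGroup F] [NormedAddCommGroup G]

theorem lpNorm_two_eq_sqrt_integral {f : α → F} (hf : AEStronglyMeasurable f μ) :
    lpNorm f 2 μ = √(∫ x, ‖f x‖ ^ 2 ∂μ) := by
  simp [lpNorm_eq_integral_norm_rpow_toReal two_ne_zero ENNReal.ofNat_ne_top hf,
    Real.sqrt_eq_rpow]

theorem lpNorm_map_of_measurableEmbedding {g : α → β} (hg : MeasurableEmbedding g) (f : β → F) :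
    lpNorm f p (μ.map g) = lpNorm (f ∘ g) p μ := by
  by_cases hf : AEStronglyMeasurable f (μ.map g)
  · rw [← toReal_eLpNorm hf, ← toReal_eLpNorm (hg.aestronglyMeasurable_map_iff.1 hf),
      hg.eLpNorm_map_measure]
  · rw [lpNorm_of_not_aestronglyMeasurable hf,
      lpNorm_of_not_aestronglyMeasurable (hg.aestronglyMeasurable_map_iff.not.1 hf)]

section AffineEquiv
variable {E E' : Type*} [NormedAddCommGroup E] [NormedSpace ℝ E] [FiniteDimensional ℝ E]
  [MeasurableSpace E] [BorelSpace E] [NormedAddCommGroup E'] [NormedSpace ℝ E']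
  [MeasurableSpace E'] [BorelSpace E']

theorem isAddHaarMeasure_map_affineEquiv (μ : Measure E) [μ.IsAddHaarMeasure]
    (e : E ≃ᴬ[ℝ] E') : (μ.map e).IsAddHaarMeasure := by
  let L : E ≃L[ℝ] E' := e.linear.toContinuousLinearEquiv
  have he : (e : E → E') = (· + e 0) ∘ L := by
    ext x
    simpa using! e.map_vadd 0 x
  have hL : (μ.map L).IsAddHaarMeasure := L.isAddHaarMeasure_map μ
  rw [he, ← Measure.map_map (by fun_prop) (by fun_prop), map_add_right_eq_self]
  exact hL

theorem exists_lpNorm_restrict_image_affineEquiv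
    (μ : Measure E) [μ.IsAddHaarMeasure] (ν : Measure E') [ν.IsAddHaarMeasure] (e : E ≃ᴬ[ℝ] E') :
    ∃ c : ℝ, 0 < c ∧ ∀ (s : Set E) (f : E' → F),
      lpNorm f p (ν.restrict (e '' s)) = c * lpNorm (f ∘ e) p (μ.restrict s) := by
  have : FiniteDimensional ℝ E' := e.linear.finiteDimensional
  have := isAddHaarMeasure_map_affineEquiv μ e
  let c := ν.addHaarScalarFactor (μ.map e)
  have hc : 0 < c := Measure.addHaarScalarFactor_pos_of_isAddHaarMeasure _ _
  have he : MeasurableEmbedding e := e.toHomeomorph.measurableEmbedding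
  have hν : ν = c • μ.map e := Measure.isAddLeftInvariant_eq_smul _ _
  refine ⟨(c : ℝ) ^ p.toReal⁻¹, by positivity, fun s f ↦ ?_⟩
  rw [hν, Measure.restrict_smul, he.restrict_map, Set.preimage_image_eq _ e.injective,
    lpNorm_smul_measure_of_ne_zero hc.ne', lpNorm_map_of_measurableEmbedding he]
  rfl

end AffineEquiv

/-- The linear map into `Lp` induced by a linear family of `p`-integrable functions; it
transports `L^p` seminorms on a space of functions to the normed space `Lp`. -/
noncomputable def toLpLinearMap [NormedSpace ℝ F] [AddCommGroup V] [Module ℝ V]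
    (f : V →ₗ[ℝ] α → F) (hf : ∀ v, MemLp (f v) p μ) : V →ₗ[ℝ] Lp F p μ where
  toFun v := (hf v).toLp
  map_add' v w := by simp only [map_add, MemLp.toLp_add (hf v) (hf w)]
  map_smul' c v := by simp only [map_smul, RingHom.id_apply, MemLp.toLp_const_smul c (hf v)]

theorem norm_toLpLinearMap [NormedSpace ℝ F] [AddCommGroup V] [Module ℝ V]
    (f : V →ₗ[ℝ] α → F) (hf : ∀ v, MemLp (f v) p μ) (v : V) :
    ‖toLpLinearMap f hf v‖ = lpNorm (f v) p μ :=
  (Lp.norm_toLp _ (hf v)).trans (toReal_eLpNorm (hf v).aestronglyMeasurable)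

theorem exists_lpNorm_le_mul_lpNorm [Fact (1 ≤ p)] [NormedSpace ℝ F] [NormedSpace ℝ G]
    [AddCommGroup V] [Module ℝ V] [FiniteDimensional ℝ V]
    (f : V →ₗ[ℝ] α → F) (g : V →ₗ[ℝ] α → G) (hf : ∀ v, MemLp (f v) p μ)
    (hg : ∀ v, MemLp (g v) p μ) (hinj : ∀ v, f v =ᵐ[μ] 0 → v = 0) :
    ∃ C : ℝ, ∀ v, lpNorm (g v) p μ ≤ C * lpNorm (f v) p μ := by
  have hker : Function.Injective (toLpLinearMap f hf) :=
    (injective_iff_map_eq_zero _).2 fun v hv ↦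
      hinj v ((hf v).coeFn_toLp.symm.trans (Lp.eq_zero_iff_ae_eq_zero.1 hv))
  let e := LinearEquiv.ofInjective (toLpLinearMap f hf) hker
  let N := (toLpLinearMap g hg ∘ₗ e.symm.toLinearMap).toContinuousLinearMap
  refine ⟨‖N‖, fun v ↦ ?_⟩
  have hN : N (e v) = toLpLinearMap g hg v := by simp [N]
  have hev : ‖e v‖ = ‖toLpLinearMap f hf v‖ := rfl
  rw [← norm_toLpLinearMap f hf, ← norm_toLpLinearMap g hg, ← hN, ← hev]
  exact N.le_opNorm _

theorem memLp_restrict_of_isCompact [TopologicalSpace α] [OpensMeasurableSpace α]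
    [T2Space α] [SecondCountableTopologyEither α F] [IsFiniteMeasureOnCompacts μ] {f : α → F}
    (hf : Continuous f) {K : Set α} (hK : IsCompact K) : MemLp f p (μ.restrict K) := by
  have : IsFiniteMeasure (μ.restrict K) := ⟨by simpa using hK.measure_lt_top⟩
  obtain ⟨C, hC⟩ := hK.exists_bound_of_continuousOn hf.continuousOn
  exact .of_bound hf.aestronglyMeasurable C (ae_restrict_of_forall_mem hK.measurableSet hC)

end LpNorm

section Polynomial

theorem totalDegree_bind₁_le {R σ τ : Type*} [CommSemiring R] {f : σ → MvPolynomial τ R} {n : ℕ}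
    (hf : ∀ i, (f i).totalDegree ≤ n) (q : MvPolynomial σ R) :
    (MvPolynomial.bind₁ f q).totalDegree ≤ q.totalDegree * n := by
  conv_lhs => rw [q.as_sum, map_sum]
  refine MvPolynomial.totalDegree_finsetSum_le fun s hs ↦ ?_
  calc (MvPolynomial.bind₁ f (MvPolynomial.monomial s (q.coeff s))).totalDegree
      ≤ ∑ i ∈ s.support, s i * n := by
        rw [MvPolynomial.bind₁_monomial]
        grw [MvPolynomial.totalDegree_mul, MvPolynomial.totalDegree_C, zero_add,
          MvPolynomial.totalDegree_finsetProd]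
        gcongr with i
        grw [MvPolynomial.totalDegree_pow, hf]
    _ = (s.sum fun _ m ↦ m) * n := (Finset.sum_mul ..).symm
    _ ≤ q.totalDegree * n := by grw [MvPolynomial.le_totalDegree hs]

variable {ι σ : Type*}

theorem exists_totalDegree_le_one_eval_eq [Fintype σ] (l : EuclideanSpace ℝ σ →ᵃ[ℝ] ℝ) :
    ∃ P : MvPolynomial σ ℝ, P.totalDegree ≤ 1 ∧
      ∀ x : EuclideanSpace ℝ σ, MvPolynomial.eval x P = l x := by
  classical
  refine ⟨∑ j, MvPolynomial.C (l.linear (EuclideanSpace.single j 1)) * MvPolynomial.X j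
    + MvPolynomial.C (l 0), ?_, fun x ↦ ?_⟩
  · grw [MvPolynomial.totalDegree_add, MvPolynomial.totalDegree_C]
    refine max_le (MvPolynomial.totalDegree_finsetSum_le fun j _ ↦ ?_) zero_le_one
    grw [MvPolynomial.totalDegree_mul, MvPolynomial.totalDegree_C, MvPolynomial.totalDegree_X]
  · have hx : x = ∑ j, x j • EuclideanSpace.single j (1 : ℝ) := by
      simpa using! ((EuclideanSpace.basisFun σ ℝ).sum_repr x).symm
    have hl : l x = l.linear x + l 0 := congrFun l.decomp x
    rw [hl]
    conv_rhs => rw [hx]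
    simp [mul_comm]

theorem exists_totalDegree_le_eval_comp_affineMap [Fintype ι] [Fintype σ]
    (A : EuclideanSpace ℝ σ →ᵃ[ℝ] EuclideanSpace ℝ ι) (q : MvPolynomial ι ℝ) :
    ∃ q' : MvPolynomial σ ℝ, q'.totalDegree ≤ q.totalDegree ∧
      ∀ x : EuclideanSpace ℝ σ, MvPolynomial.eval x q' = MvPolynomial.eval (A x) q := by
  choose P hdeg hP using fun i ↦ exists_totalDegree_le_one_eval_eq
    ((EuclideanSpace.projₗ i : EuclideanSpace ℝ ι →ₗ[ℝ] ℝ).toAffineMap.comp A)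
  refine ⟨MvPolynomial.bind₁ P q, by simpa using totalDegree_bind₁_le hdeg q, fun x ↦ ?_⟩
  have hA : (A x).ofLp = fun i ↦ MvPolynomial.aeval x.ofLp (P i) := by
    ext i
    simp [MvPolynomial.aeval_eq_eval, hP]
  rw [hA, ← MvPolynomial.aeval_eq_eval, ← MvPolynomial.aeval_eq_eval]
  exact MvPolynomial.aeval_bind₁ _ _ _

theorem eq_zero_of_eval_eq_zero_on_isOpen [Finite σ] {U : Set (EuclideanSpace ℝ σ)} (hU : IsOpen U)
    (hU' : U.Nonempty) {q : MvPolynomial σ ℝ} (hq : ∀ x ∈ U, MvPolynomial.eval x q = 0) :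
    q = 0 := by
  cases nonempty_fintype σ
  obtain ⟨x, hx⟩ := hU'
  let V : Set (σ → ℝ) := WithLp.toLp 2 ⁻¹' U
  have hV : IsOpen V := hU.preimage (by fun_prop)
  obtain ⟨ε, hε, hball⟩ := Metric.isOpen_iff.1 hV x hx
  rw [ball_pi _ hε] at hball
  refine MvPolynomial.funext_set (fun i ↦ Metric.ball (x i) ε) (fun i ↦ ?_) fun y hy ↦ ?_
  · rw [Real.ball_eq_Ioo]
    exact Set.Ioo_infinite (by linarith)
  · simpa using hq _ (hball hy)

theorem contDiff_eval [Fintype σ] {n : WithTop ℕ∞} (q : MvPolynomial σ ℝ) :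
    ContDiff ℝ n fun x : EuclideanSpace ℝ σ ↦ MvPolynomial.eval x q := by
  induction q using MvPolynomial.induction_on with
  | C a => simpa using contDiff_const
  | add p q hp hq => simpa using hp.add hq
  | mul_X p i hp => simpa using hp.mul (by fun_prop)

end Polynomial

section WeightedEval
variable {ι : Type*} {p : ℝ≥0∞} {w : EuclideanSpace ℝ ι → ℝ}

/-- The linear map sending a polynomial `q` to the function `w q`; the weight is `1` for `q`
itself and the bubble function for `ψ q`. -/
noncomputable def weightedEval (w : EuclideanSpace ℝ ι → ℝ) :
    MvPolynomial ι ℝ →ₗ[ℝ] EuclideanSpace ℝ ι → ℝ where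
  toFun q x := w x * MvPolynomial.eval x q
  map_add' q r := by ext x; simp [mul_add]
  map_smul' c q := by ext x; simp [mul_left_comm]

theorem weightedEval_apply (q : MvPolynomial ι ℝ) (x : EuclideanSpace ℝ ι) :
    weightedEval w q x = w x * MvPolynomial.eval x q := rfl

theorem contDiff_weightedEval [Fintype ι] {n : WithTop ℕ∞} (hw : ContDiff ℝ n w)
    (q : MvPolynomial ι ℝ) : ContDiff ℝ n (weightedEval w q) :=
  hw.mul (contDiff_eval q)

/-- The linear map sending a polynomial `q` to the derivative of `w q`. -/
noncomputable def fderivWeightedEval [Fintype ι] (hw : ContDiff ℝ 1 w) :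
    MvPolynomial ι ℝ →ₗ[ℝ] EuclideanSpace ℝ ι → EuclideanSpace ℝ ι →L[ℝ] ℝ where
  toFun q := fderiv ℝ (weightedEval w q)
  map_add' q r := by
    have hd (q) := (contDiff_weightedEval hw q).differentiable one_ne_zero
    ext1 x
    rw [map_add, fderiv_add (hd q x) (hd r x), Pi.add_apply]
  map_smul' c q := by
    rw [map_smul, fderiv_const_smul_field, RingHom.id_apply]

theorem exists_lpNorm_le_mul_lpNorm_weightedEval [Finite ι] [Fact (1 ≤ p)] {F : Type*}
    [NormedAddCommGroup F] [NormedSpace ℝ F] (μ : Measure (EuclideanSpace ℝ ι))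
    [IsFiniteMeasureOnCompacts μ] [μ.IsOpenPosMeasure] {K : Set (EuclideanSpace ℝ ι)}
    (hK : IsCompact K) (hK' : (interior K).Nonempty) (hw : Continuous w)
    (hw' : ∀ x ∈ interior K, w x ≠ 0) (k : ℕ)
    {g : MvPolynomial ι ℝ →ₗ[ℝ] EuclideanSpace ℝ ι → F} (hg : ∀ q, Continuous (g q)) :
    ∃ C : ℝ, ∀ q : MvPolynomial ι ℝ, q.totalDegree ≤ k →
      lpNorm (g q) p (μ.restrict K) ≤ C * lpNorm (weightedEval w q) p (μ.restrict K) := by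
  cases nonempty_fintype ι
  have hcont (q : MvPolynomial ι ℝ) : Continuous (weightedEval w q) :=
    (contDiff_weightedEval (contDiff_zero.2 hw) q).continuous
  have hinj (q : MvPolynomial ι ℝ) (hq : weightedEval w q =ᵐ[μ.restrict K] 0) : q = 0 := by
    have hzero : Set.EqOn (weightedEval w q) 0 (interior K) :=
      Measure.eqOn_open_of_ae_eq (ae_restrict_of_ae_restrict_of_subset interior_subset hq)
        isOpen_interior (hcont q).continuousOn continuousOn_const
    exact eq_zero_of_eval_eq_zero_on_isOpen isOpen_interior hK' fun x hx ↦
      (mul_eq_zero.1 (hzero hx)).resolve_left (hw' x hx)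
  let V := MvPolynomial.restrictTotalDegree ι ℝ k
  obtain ⟨C, hC⟩ := exists_lpNorm_le_mul_lpNorm (p := p) (weightedEval w ∘ₗ V.subtype)
    (g ∘ₗ V.subtype) (fun q ↦ memLp_restrict_of_isCompact (μ := μ) (hcont q) hK)
    (fun q ↦ memLp_restrict_of_isCompact (hg q) hK) fun q hq ↦ Subtype.ext (hinj q hq)
  exact ⟨C, fun q hq ↦ hC ⟨q, (MvPolynomial.mem_restrictTotalDegree ι k q).2 hq⟩⟩

end WeightedEval

section Gradient
variable {E F : Type*} [NormedAddCommGroup E] [NormedSpace ℝ E] [NormedAddCommGroup F]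
  [InnerProductSpace ℝ F] [CompleteSpace F] {f : F → ℝ} {e : E ≃ᴬ[ℝ] F} {s : Set E} {y : F} {r : ℝ}

theorem norm_gradient_apply_le (hf : Differentiable ℝ f) (e : E ≃ᴬ[ℝ] F) (x : E) :
    ‖gradient f (e x)‖ ≤ ‖fderiv ℝ (f ∘ e) x‖ * ‖e.symm.toContinuousAffineMap.contLinear‖ := by
  have hfe : f = (f ∘ e) ∘ e.symm := by ext y; simp
  have hd : DifferentiableAt ℝ (f ∘ e) (e.symm (e x)) :=
    (hf _).comp _ e.toContinuousAffineMap.differentiableAt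
  have h : fderiv ℝ f (e x) =
      (fderiv ℝ (f ∘ e) x).comp e.symm.toContinuousAffineMap.contLinear := by
    conv_lhs => rw [hfe]
    simpa using! (hd.hasFDerivAt.comp (e x) e.symm.toContinuousAffineMap.hasFDerivAt).fderiv
  rw [gradient, LinearIsometryEquiv.norm_map, h]
  exact ContinuousLinearMap.opNorm_comp_le _ _

theorem mul_norm_gradient_apply_le (hf : Differentiable ℝ f)
    (hs : Bornology.IsBounded s) (hr : 0 ≤ r) (hball : Metric.closedBall y r ⊆ e '' s) (x : E) :
    r * ‖gradient f (e x)‖ ≤ Metric.diam s * ‖fderiv ℝ (f ∘ e) x‖ := by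
  have hmaps : Set.MapsTo e.symm (Metric.closedBall y r) s := fun z hz ↦ by
    obtain ⟨x, hx, rfl⟩ := hball hz
    simpa using hx
  calc r * ‖gradient f (e x)‖
      ≤ r * (‖fderiv ℝ (f ∘ e) x‖ * ‖e.symm.toContinuousAffineMap.contLinear‖) := by
        gcongr
        exact norm_gradient_apply_le hf e x
    _ = r * ‖e.symm.toContinuousAffineMap.contLinear‖ * ‖fderiv ℝ (f ∘ e) x‖ := by ring
    _ ≤ Metric.diam s * ‖fderiv ℝ (f ∘ e) x‖ := by
        gcongr
        exact mul_norm_contLinear_le_diam _ hr hs hmaps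

theorem continuous_gradient (hf : ContDiff ℝ 1 f) : Continuous (gradient f) :=
  (InnerProductSpace.toDual ℝ F).symm.continuous.comp (hf.continuous_fderiv one_ne_zero)

theorem mul_lpNorm_gradient_comp_le [MeasurableSpace E] [BorelSpace E]
    [FiniteDimensional ℝ E] {μ : Measure E} [IsFiniteMeasureOnCompacts μ] {p : ℝ≥0∞}
    (hf : ContDiff ℝ 1 f) (hs : IsCompact s) (hr : 0 ≤ r)
    (hball : Metric.closedBall y r ⊆ e '' s) :
    r * lpNorm (fun x ↦ ‖gradient f (e x)‖) p (μ.restrict s) ≤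
      Metric.diam s * lpNorm (fderiv ℝ (f ∘ e)) p (μ.restrict s) := by
  have hfe : Continuous (fderiv ℝ (f ∘ e)) :=
    (hf.comp e.toContinuousAffineMap.contDiff).continuous_fderiv one_ne_zero
  calc r * lpNorm (fun x ↦ ‖gradient f (e x)‖) p (μ.restrict s)
      = lpNorm (r • fun x ↦ ‖gradient f (e x)‖) p (μ.restrict s) := by
        rw [lpNorm_const_smul, coe_nnnorm, Real.norm_of_nonneg hr]
    _ ≤ lpNorm (Metric.diam s • fun x ↦ ‖fderiv ℝ (f ∘ e) x‖) p (μ.restrict s) := by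
        refine lpNorm_mono_real (memLp_restrict_of_isCompact (hfe.norm.const_smul _) hs) fun x ↦ ?_
        simpa [abs_of_nonneg hr] using mul_norm_gradient_apply_le
          (hf.differentiable one_ne_zero) hs.isBounded hr hball x
    _ = Metric.diam s * lpNorm (fderiv ℝ (f ∘ e)) p (μ.restrict s) := by
        rw [lpNorm_const_smul, coe_nnnorm, Real.norm_of_nonneg Metric.diam_nonneg,
          lpNorm_norm hfe.aestronglyMeasurable]

end Gradient

section Bubble
variable {κ E : Type*} [NormedAddCommGroup E] [NormedSpace ℝ E]

/-- The closed simplex with vertices `b i`. -/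
abbrev simplex (b : AffineBasis κ ℝ E) : Set E := convexHull ℝ (Set.range b)

theorem isCompact_simplex [Finite κ] (b : AffineBasis κ ℝ E) : IsCompact (simplex b) :=
  (Set.finite_range b).isCompact_convexHull ℝ

variable [Fintype κ]

/-- The interior bubble function of the simplex with vertices `b i`, normalized to be `1` at the
barycenter; for a triangle the factor is `3 ^ 3 = 27`. -/
noncomputable def bubble (b : AffineBasis κ ℝ E) (x : E) : ℝ :=
  Fintype.card κ ^ Fintype.card κ * ∏ i, b.coord i x

theorem contDiff_bubble [FiniteDimensional ℝ E] (b : AffineBasis κ ℝ E) {n : WithTop ℕ∞} :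
    ContDiff ℝ n (bubble b) :=
  contDiff_const.mul (contDiff_prod fun i _ ↦ (smooth_barycentric_coord b i).of_le le_top)

theorem bubble_ne_zero_of_mem_interior (b : AffineBasis κ ℝ E) {x : E}
    (hx : x ∈ interior (simplex b)) : bubble b x ≠ 0 := by
  rw [b.interior_convexHull] at hx
  have := b.nonempty
  exact mul_ne_zero (by simp) (Finset.prod_ne_zero_iff.2 fun i _ ↦ (hx i).ne')

theorem bubble_comp_affineEquiv {b b' : AffineBasis κ ℝ E} {e : E ≃ᴬ[ℝ] E}
    (he : ∀ i, e (b i) = b' i) : bubble b' ∘ e = bubble b := by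
  ext x
  have hcoord (i : κ) : b'.coord i (e x) = b.coord i x :=
    coord_affineEquiv_apply (e := e.toAffineEquiv) he i x
  simp only [Function.comp_apply, bubble, hcoord]

theorem bubble_fin_three (b : AffineBasis (Fin 3) ℝ E) (x : E) :
    bubble b x = 27 * b.coord 0 x * b.coord 1 x * b.coord 2 x := by
  rw [bubble, Fin.prod_univ_three, Fintype.card_fin]
  norm_num [mul_assoc]

end Bubble

section Estimate
variable {ι κ : Type*} [Fintype ι] [Fintype κ] {p : ℝ≥0∞}

/-- The norm `‖f‖_{L^p(s)} + diam(s) ‖∇f‖_{L^p(s)}`, in which both terms scale alike. -/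
noncomputable def scaledSobolevNorm (p : ℝ≥0∞) (s : Set (EuclideanSpace ℝ ι))
    (f : EuclideanSpace ℝ ι → ℝ) : ℝ :=
  lpNorm f p (volume.restrict s) + Metric.diam s * lpNorm (gradient f) p (volume.restrict s)

theorem lpNorm_le_scaledSobolevNorm (s : Set (EuclideanSpace ℝ ι)) (f : EuclideanSpace ℝ ι → ℝ) :
    lpNorm f p (volume.restrict s) ≤ scaledSobolevNorm p s f :=
  le_add_of_nonneg_right (mul_nonneg Metric.diam_nonneg lpNorm_nonneg)

theorem exists_lpNorm_bubble_equivalence [Fact (1 ≤ p)]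
    (b : AffineBasis κ ℝ (EuclideanSpace ℝ ι)) (k : ℕ) :
    ∃ C : ℝ, 0 < C ∧ ∀ q : MvPolynomial ι ℝ, q.totalDegree ≤ k →
      lpNorm (weightedEval 1 q) p (volume.restrict (simplex b)) ≤
        C * lpNorm (weightedEval (bubble b) q) p (volume.restrict (simplex b)) ∧
      lpNorm (weightedEval (bubble b) q) p (volume.restrict (simplex b)) ≤
        C * lpNorm (weightedEval 1 q) p (volume.restrict (simplex b)) ∧
      lpNorm (fderiv ℝ (weightedEval (bubble b) q)) p (volume.restrict (simplex b)) ≤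
        C * lpNorm (weightedEval 1 q) p (volume.restrict (simplex b)) := by
  have hK' : (interior (simplex b)).Nonempty := ⟨_, b.centroid_mem_interior_convexHull⟩
  have hψ : ContDiff ℝ 1 (bubble b) := contDiff_bubble b
  have hone : ContDiff ℝ 1 (1 : EuclideanSpace ℝ ι → ℝ) := contDiff_const
  obtain ⟨C₁, hC₁⟩ := exists_lpNorm_le_mul_lpNorm_weightedEval (p := p) volume
    (isCompact_simplex b) hK' hψ.continuous (fun _ ↦ bubble_ne_zero_of_mem_interior b) k
    fun q ↦ (contDiff_weightedEval hone q).continuous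
  obtain ⟨C₂, hC₂⟩ := exists_lpNorm_le_mul_lpNorm_weightedEval (p := p) volume
    (isCompact_simplex b) hK' hone.continuous (by simp) k
    fun q ↦ (contDiff_weightedEval hψ q).continuous
  obtain ⟨C₃, hC₃⟩ := exists_lpNorm_le_mul_lpNorm_weightedEval (p := p) volume
    (isCompact_simplex b) hK' hone.continuous (by simp) k (g := fderivWeightedEval hψ)
    fun q ↦ (contDiff_weightedEval hψ q).continuous_fderiv one_ne_zero
  let C := max 1 (max C₁ (max C₂ C₃))
  refine ⟨C, by positivity, fun q hq ↦
      ⟨(hC₁ q hq).trans ?_, (hC₂ q hq).trans ?_, (hC₃ q hq).trans ?_⟩⟩ <;>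
    exact mul_le_mul_of_nonneg_right (by simp [C]) lpNorm_nonneg

theorem exists_lpNorm_bubble_pullback (b b' : AffineBasis κ ℝ (EuclideanSpace ℝ ι)) {γ : ℝ}
    (hγ : 0 < γ) {y : EuclideanSpace ℝ ι}
    (hball : Metric.closedBall y (γ * Metric.diam (simplex b')) ⊆ simplex b') :
    ∃ c : ℝ, 0 < c ∧ ∀ q : MvPolynomial ι ℝ, ∃ q' : MvPolynomial ι ℝ,
      q'.totalDegree ≤ q.totalDegree ∧
      lpNorm (weightedEval 1 q) p (volume.restrict (simplex b')) =
        c * lpNorm (weightedEval 1 q') p (volume.restrict (simplex b)) ∧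
      lpNorm (weightedEval (bubble b') q) p (volume.restrict (simplex b')) =
        c * lpNorm (weightedEval (bubble b) q') p (volume.restrict (simplex b)) ∧
      Metric.diam (simplex b') *
          lpNorm (gradient (weightedEval (bubble b') q)) p (volume.restrict (simplex b')) ≤
        c * (Metric.diam (simplex b) / γ *
          lpNorm (fderiv ℝ (weightedEval (bubble b) q')) p (volume.restrict (simplex b))) := by
  obtain ⟨e₀, he⟩ := exists_affineEquiv_apply_eq b b'
  let e : EuclideanSpace ℝ ι ≃ᴬ[ℝ] EuclideanSpace ℝ ι := e₀.toContinuousAffineEquiv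
  have himage : e '' simplex b = simplex b' := image_convexHull_range (e := e₀.toAffineMap) he
  obtain ⟨c, hc, hnorm⟩ := exists_lpNorm_restrict_image_affineEquiv (F := ℝ) (p := p)
    (volume : Measure (EuclideanSpace ℝ ι)) volume e
  rw [← himage] at hball ⊢
  refine ⟨c, hc, fun q ↦ ?_⟩
  obtain ⟨q', hdeg, heval⟩ := exists_totalDegree_le_eval_comp_affineMap e₀.toAffineMap q
  have hpull {w w' : EuclideanSpace ℝ ι → ℝ} (hw : w' ∘ e = w) :
      weightedEval w' q ∘ e = weightedEval w q' :=
    funext fun x ↦ congrArg₂ (· * ·) (congrFun hw x) (heval x).symm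
  have hone := hpull (w := 1) (w' := 1) rfl
  have hbubble := hpull (bubble_comp_affineEquiv he)
  have hψ : ContDiff ℝ 1 (weightedEval (bubble b') q) :=
    contDiff_weightedEval (contDiff_bubble b') q
  refine ⟨q', hdeg, by rw [hnorm, hone], by rw [hnorm, hbubble], ?_⟩
  have hgrad := mul_lpNorm_gradient_comp_le (p := p) (μ := volume) hψ
    (isCompact_simplex b) (by positivity) hball
  rw [← lpNorm_norm (continuous_gradient hψ).aestronglyMeasurable, hnorm, mul_left_comm]
  refine mul_le_mul_of_nonneg_left ?_ hc.le
  rw [div_mul_eq_mul_div, le_div_iff₀' hγ, ← mul_assoc, ← hbubble]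
  exact hgrad

theorem scaledSobolevNorm_two {f : EuclideanSpace ℝ ι → ℝ} (hf : ContDiff ℝ 1 f)
    (s : Set (EuclideanSpace ℝ ι)) :
    scaledSobolevNorm 2 s f =
      √(∫ x in s, f x ^ 2) + Metric.diam s * √(∫ x in s, ‖gradient f x‖ ^ 2) := by
  simp only [scaledSobolevNorm, lpNorm_two_eq_sqrt_integral hf.continuous.aestronglyMeasurable,
    lpNorm_two_eq_sqrt_integral (continuous_gradient hf).aestronglyMeasurable, Real.norm_eq_abs,
    sq_abs]

end Estimate

end BubbleEstimate

open BubbleEstimate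

theorem stmt_7_general {ι κ : Type*} [Fintype ι] [Fintype κ] {p : ℝ≥0∞} [Fact (1 ≤ p)]
    (k : ℕ) {γ : ℝ} (hγ : 0 < γ) :
    ∃ C : ℝ, 0 < C ∧ ∀ b : AffineBasis κ ℝ (EuclideanSpace ℝ ι),
      (∃ c, Metric.closedBall c (γ * Metric.diam (simplex b)) ⊆ simplex b) →
      ∀ q : MvPolynomial ι ℝ, q.totalDegree ≤ k →
        C⁻¹ * lpNorm (weightedEval 1 q) p (volume.restrict (simplex b)) ≤
          scaledSobolevNorm p (simplex b) (weightedEval (bubble b) q) ∧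
        scaledSobolevNorm p (simplex b) (weightedEval (bubble b) q) ≤
          C * lpNorm (weightedEval 1 q) p (volume.restrict (simplex b)) := by
  rcases isEmpty_or_nonempty (AffineBasis κ ℝ (EuclideanSpace ℝ ι)) with _ | ⟨⟨b₀⟩⟩
  · exact ⟨1, one_pos, isEmptyElim⟩
  obtain ⟨C, hC, hb₀⟩ := exists_lpNorm_bubble_equivalence (p := p) b₀ k
  let ρ := Metric.diam (simplex b₀) / γ
  have hρ : 0 ≤ ρ := by positivity
  refine ⟨C * (1 + ρ), by positivity, fun b ⟨y, hball⟩ q hq ↦ ?_⟩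
  obtain ⟨c, hc, hpull⟩ := exists_lpNorm_bubble_pullback (p := p) b₀ b hγ hball
  obtain ⟨q', hdeg, hone, hbubble, hgrad⟩ := hpull q
  obtain ⟨h₁, h₂, h₃⟩ := hb₀ q' (hdeg.trans hq)
  constructor
  · rw [inv_mul_le_iff₀ (by positivity)]
    calc lpNorm (weightedEval 1 q) p (volume.restrict (simplex b))
        ≤ c * (C * lpNorm (weightedEval (bubble b₀) q') p (volume.restrict (simplex b₀))) := by
          grw [hone, h₁]
      _ = C * 1 * lpNorm (weightedEval (bubble b) q) p (volume.restrict (simplex b)) := by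
          rw [hbubble]
          ring
      _ ≤ C * (1 + ρ) * scaledSobolevNorm p (simplex b) (weightedEval (bubble b) q) := by
          gcongr
          · exact lpNorm_nonneg
          · exact le_add_of_nonneg_right hρ
          · exact lpNorm_le_scaledSobolevNorm _ _
  · calc scaledSobolevNorm p (simplex b) (weightedEval (bubble b) q)
        ≤ c * lpNorm (weightedEval (bubble b₀) q') p (volume.restrict (simplex b₀)) +
            c * (ρ * lpNorm (fderiv ℝ (weightedEval (bubble b₀) q')) p
              (volume.restrict (simplex b₀))) := add_le_add hbubble.le hgrad
      _ ≤ c * (C * lpNorm (weightedEval 1 q') p (volume.restrict (simplex b₀))) +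
            c * (ρ * (C * lpNorm (weightedEval 1 q') p (volume.restrict (simplex b₀)))) := by
          grw [h₂, h₃]
      _ = C * (1 + ρ) * lpNorm (weightedEval 1 q) p (volume.restrict (simplex b)) := by
          rw [hone]
          ring

/-- Lemma 3.1 (interior bubble functions), second estimate, triangle form:
for every degree `k` and shape-regularity parameter `γ > 0` there is `C > 0`
such that for every nondegenerate triangle `T = conv{p₀, p₁, p₂} ⊆ ℝ²`
containing a ball of radius `γ · h_T` (inradius ≥ γ h_T), with barycentric
coordinates `lam i`, and every bivariate polynomial `q` of total degree ≤ `k`,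
`C⁻¹ ‖q‖_{L²(T)} ≤ ‖ψ_T q‖_{L²(T)} + h_T ‖∇(ψ_T q)‖_{L²(T)} ≤ C ‖q‖_{L²(T)}`,
where `ψ_T = 27 λ₀ λ₁ λ₂`. -/
theorem stmt_7 (k : ℕ) (γ : ℝ) (hγ : 0 < γ) :
    ∃ C : ℝ, 0 < C ∧
      ∀ p : Fin 3 → EuclideanSpace ℝ (Fin 2),
        AffineIndependent ℝ p →
        (∃ c : EuclideanSpace ℝ (Fin 2),
          Metric.closedBall c (γ * Metric.diam (convexHull ℝ (Set.range p)))
            ⊆ convexHull ℝ (Set.range p)) →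
        ∀ lam : Fin 3 → (EuclideanSpace ℝ (Fin 2) →ᵃ[ℝ] ℝ),
          (∀ i j, lam i (p j) = if i = j then 1 else 0) →
          ∀ q : MvPolynomial (Fin 2) ℝ, q.totalDegree ≤ k →
            (C⁻¹ * Real.sqrt (∫ x in convexHull ℝ (Set.range p),
                  (MvPolynomial.eval (fun i => x i) q) ^ 2)
              ≤ Real.sqrt (∫ x in convexHull ℝ (Set.range p),
                    ((27 * lam 0 x * lam 1 x * lam 2 x)
                      * MvPolynomial.eval (fun i => x i) q) ^ 2)
                + Metric.diam (convexHull ℝ (Set.range p)) *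
                  Real.sqrt (∫ x in convexHull ℝ (Set.range p),
                    ‖gradient (fun y : EuclideanSpace ℝ (Fin 2) =>
                        (27 * lam 0 y * lam 1 y * lam 2 y)
                          * MvPolynomial.eval (fun i => y i) q) x‖ ^ 2))
            ∧ (Real.sqrt (∫ x in convexHull ℝ (Set.range p),
                    ((27 * lam 0 x * lam 1 x * lam 2 x)
                      * MvPolynomial.eval (fun i => x i) q) ^ 2)
                + Metric.diam (convexHull ℝ (Set.range p)) *
                  Real.sqrt (∫ x in convexHull ℝ (Set.range p),
                    ‖gradient (fun y : EuclideanSpace ℝ (Fin 2) =>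
                        (27 * lam 0 y * lam 1 y * lam 2 y)
                          * MvPolynomial.eval (fun i => y i) q) x‖ ^ 2)
              ≤ C * Real.sqrt (∫ x in convexHull ℝ (Set.range p),
                  (MvPolynomial.eval (fun i => x i) q) ^ 2)) := by
  obtain ⟨C, hC, h⟩ := stmt_7_general (ι := Fin 2) (κ := Fin 3) (p := 2) k hγ
  refine ⟨C, hC, fun v hv hball lam hlam q hq ↦ ?_⟩
  let b : AffineBasis (Fin 3) ℝ (EuclideanSpace ℝ (Fin 2)) :=
    ⟨v, hv, hv.affineSpan_eq_top_iff_card_eq_finrank_add_one.2 (by simp)⟩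
  have hone : weightedEval 1 q = fun x ↦ MvPolynomial.eval (fun i ↦ x i) q :=
    funext fun _ ↦ one_mul _
  have hbubble : weightedEval (bubble b) q =
      fun x ↦ 27 * lam 0 x * lam 1 x * lam 2 x * MvPolynomial.eval (fun i ↦ x i) q := by
    ext x
    simp only [weightedEval_apply, bubble_fin_three, coord_eq_of_apply_eq b hlam]
  have hest := h b hball q hq
  rw [scaledSobolevNorm_two (contDiff_weightedEval (contDiff_bubble b) q), hbubble, hone,
    lpNorm_two_eq_sqrt_integral (contDiff_eval (n := 0) q).continuous.aestronglyMeasurable] at hest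
  simp only [Real.norm_eq_abs, sq_abs] at hest
  exact hest
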